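/- Conserved integral quantity for F(t) = 2 from the multiplier e^{2∫Q} u: Let B, E, Q : ℝ → ℝ be smooth, take F(t) ≡ 2, and let H : ℝ → ℝ satisfy H' = Q. Suppose u : ℝ × ℝ → ℝ is smooth, satisfies 𝔈[u] = 0 everywhere, and there exists L > 0 such that u(t,x) = 0 whenever |x| ≥ L. Then the function t ↦ ∫_ℝ e^{2H(t)} u(t,x)² dx is constant. -/

import Mathlib

/-!
After multiplication by `u`, the spatial derivative terms of `𝔈[u]` sum to an `x`-derivative minus
`(F - 2) / 2 * u_x³`, the latter coming from `u² u_xxx + F u u_x u_xx`.  The `x`-derivative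
integrates to zero over `ℝ`, so `d/dt ∫ u² = (F - 2) ∫ u_x³ - 2 Q ∫ u²`, and the integrating factor
`e^{2H}` absorbs the damping term.  The cubic term vanishes when `F = 2`.
-/

open Real MeasureTheory

/-- Partial derivative with respect to the first (time) variable. -/
noncomputable def pt (f : ℝ → ℝ → ℝ) (t x : ℝ) : ℝ := deriv (fun s => f s x) t

/-- Partial derivative with respect to the second (space) variable. -/
noncomputable def px (f : ℝ → ℝ → ℝ) (t x : ℝ) : ℝ := deriv (fun y => f t y) x

/-- The fifth-order KdV expression
`𝔈[u] = u_t + u_xxxxx + B u_xxx + u u_xxx + E u u_x + F u_x u_xx + Q u`. -/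
noncomputable def KdV (B E F Q : ℝ → ℝ) (u : ℝ → ℝ → ℝ) (t x : ℝ) : ℝ :=
  pt u t x + px (px (px (px (px u)))) t x + B t * px (px (px u)) t x
    + u t x * px (px (px u)) t x + E t * (u t x * px u t x)
    + F t * (px u t x * px (px u) t x) + Q t * u t x

section ParametricIntegral

open Set Filter Topology Function

variable {𝕜 : Type*} [RCLike 𝕜]
  {X : Type*} [TopologicalSpace X] [T2Space X] [MeasurableSpace X] [OpensMeasurableSpace X]
  {μ : Measure X} [IsFiniteMeasureOnCompacts μ]
  {E : Type*} [NormedAddCommGroup E] [NormedSpace ℝ E] [NormedSpace 𝕜 E]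

theorem hasDerivAt_integral_of_eventually_support_subset
    {f f' : 𝕜 → X → E} {t : 𝕜} {K : Set X} (hK : IsCompact K)
    (hf : ∀ s, Continuous (f s)) (hf' : Continuous (uncurry f'))
    (hderiv : ∀ s x, HasDerivAt (fun r => f r x) (f' s x) s)
    (hsupp : ∀ᶠ s in 𝓝 t, support (f s) ⊆ K) :
    HasDerivAt (fun s => ∫ x, f s x ∂μ) (∫ x, f' t x ∂μ) t := by
  have hsupp' : ∀ᶠ s in 𝓝 t, support (f' s) ⊆ K := by
    filter_upwards [hsupp.eventually_nhds] with s hs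
    refine support_subset_iff'.2 fun x hx => ?_
    have hzero : (fun r => f r x) =ᶠ[𝓝 s] fun _ => 0 :=
      hs.mono fun r hr => support_subset_iff'.1 hr x hx
    exact (hderiv s x).unique ((hasDerivAt_const s 0).congr_of_eventuallyEq hzero)
  have integrable_of_support {g : X → E} (hg : Continuous g) (hgK : support g ⊆ K) :
      Integrable g μ :=
    hg.integrable_of_hasCompactSupport (.of_support_subset_isCompact hK hgK)
  obtain ⟨N, hN, hNt⟩ := exists_compact_mem_nhds t
  obtain ⟨C, hC⟩ := (hN.prod hK).exists_bound_of_continuousOn hf'.continuousOn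
  have hbound : ∀ x, ∀ s ∈ N ∩ {s | support (f' s) ⊆ K}, ‖f' s x‖ ≤ K.indicator (fun _ => C) x := by
    rintro x s ⟨hsN, hsK⟩
    by_cases hx : x ∈ K
    · exact (hC (s, x) ⟨hsN, hx⟩).trans_eq (indicator_of_mem hx fun _ => C).symm
    · simp [hx, support_subset_iff'.1 hsK x hx]
  have hbound_int : Integrable (K.indicator fun _ => C) μ :=
    (integrableOn_const hK.measure_ne_top).integrable_indicator hK.measurableSet
  exact (hasDerivAt_integral_of_dominated_loc_of_deriv_le (inter_mem hNt hsupp')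
    (hsupp.mono fun s hs => (integrable_of_support (hf s) hs).aestronglyMeasurable)
    (integrable_of_support (hf t) hsupp.self_of_nhds)
    (integrable_of_support (hf'.uncurry_left t) hsupp'.self_of_nhds).aestronglyMeasurable
    (.of_forall hbound) hbound_int (.of_forall fun x s _ => hderiv s x)).2

end ParametricIntegral

lemma integrable_pow_of_hasCompactSupport {X : Type*} [TopologicalSpace X] [MeasurableSpace X]
    [OpensMeasurableSpace X] {μ : Measure X} [IsFiniteMeasureOnCompacts μ] {R : Type*}
    [NormedRing R] {f : X → R} (hf : Continuous f) (hsupp : HasCompactSupport f) {n : ℕ}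
    (hn : n ≠ 0) : Integrable (fun x => f x ^ n) μ :=
  (hf.pow n).integrable_of_hasCompactSupport (hsupp.comp_left (g := (· ^ n)) (zero_pow hn))

section PartialDerivatives

open Function

variable {f : ℝ → ℝ → ℝ} {t : ℝ}

lemma hasDerivAt_px {x : ℝ} (hf : DifferentiableAt ℝ (f t) x) :
    HasDerivAt (f t) (px f t x) x :=
  hf.hasDerivAt

lemma contDiff_px {n : WithTop ℕ∞} (hf : ContDiff ℝ (n + 1) (f t)) : ContDiff ℝ n (px f t) :=
  (contDiff_succ_iff_deriv.1 hf).2.2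

lemma hasCompactSupport_px (hf : HasCompactSupport (f t)) : HasCompactSupport (px f t) :=
  hf.deriv

lemma hasDerivAt_pt {x : ℝ} (hf : DifferentiableAt ℝ (uncurry f) (t, x)) :
    HasDerivAt (fun s => f s x) (pt f t x) t := by
  have hline : DifferentiableAt ℝ (fun s => uncurry f (s, x)) t := by fun_prop
  exact hline.hasDerivAt

lemma continuous_uncurry_pt (hf : ContDiff ℝ 1 (uncurry f)) : Continuous (uncurry (pt f)) := by
  have hswap : ContDiff ℝ 1 (uncurry fun (p : ℝ × ℝ) s => uncurry f (s, p.2)) := by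
    simp only [uncurry_def]
    fun_prop
  exact (Continuous.fderiv_one hswap continuous_fst).clm_apply continuous_const

end PartialDerivatives

section EnergyBalance

open Filter Topology Function

/-- The flux of the energy density `u² / 2` for the fifth-order KdV equation, without the weight
`e^{2H}`.  The last term, absent from the conservation law for `F = 2`, is chosen so that the
remaining source `(F - 2) / 2 * u_x³` contains only first derivatives. -/
noncomputable def energyFlux (B E F : ℝ → ℝ) (u : ℝ → ℝ → ℝ) (t x : ℝ) : ℝ :=
  (u t x * px (px (px (px u))) t x - px u t x * px (px (px u)) t x + px (px u) t x ^ 2 / 2)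
    + B t * (u t x * px (px u) t x - px u t x ^ 2 / 2)
    + u t x ^ 2 * px (px u) t x
    + E t * (u t x ^ 3 / 3)
    + (F t - 2) * (u t x * px u t x ^ 2 / 2)

variable {B E F Q : ℝ → ℝ} {u : ℝ → ℝ → ℝ} {t : ℝ}

lemma hasDerivAt_energyFlux_of_KdV_eq_zero (hu : ContDiff ℝ 5 (u t)) {x : ℝ}
    (hsol : KdV B E F Q u t x = 0) :
    HasDerivAt (energyFlux B E F u t)
      ((F t - 2) / 2 * px u t x ^ 3 - Q t * u t x ^ 2 - u t x * pt u t x) x := by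
  have hu₁ : ContDiff ℝ 4 (px u t) := contDiff_px hu
  have hu₂ : ContDiff ℝ 3 (px (px u) t) := contDiff_px hu₁
  have hu₃ : ContDiff ℝ 2 (px (px (px u)) t) := contDiff_px hu₂
  have hu₄ : ContDiff ℝ 1 (px (px (px (px u))) t) := contDiff_px hu₃
  have d₀ := hasDerivAt_px (hu.differentiable (by simp) x)
  have d₁ := hasDerivAt_px (hu₁.differentiable (by simp) x)
  have d₂ := hasDerivAt_px (hu₂.differentiable (by simp) x)
  have d₃ := hasDerivAt_px (hu₃.differentiable (by simp) x)
  have d₄ := hasDerivAt_px (hu₄.differentiable (by simp) x)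
  have fifth_order : HasDerivAt (fun y => u t y * px (px (px (px u))) t y
      - px u t y * px (px (px u)) t y + px (px u) t y ^ 2 / 2)
      (u t x * px (px (px (px (px u)))) t x) x :=
    (((d₀.mul d₄).sub (d₁.mul d₃)).add ((d₂.fun_pow 2).div_const 2)).congr_deriv (by ring)
  have third_order : HasDerivAt (fun y => u t y * px (px u) t y - px u t y ^ 2 / 2)
      (u t x * px (px (px u)) t x) x :=
    ((d₀.mul d₂).sub ((d₁.fun_pow 2).div_const 2)).congr_deriv (by ring)
  have quasilinear : HasDerivAt (fun y => u t y ^ 2 * px (px u) t y)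
      (u t x ^ 2 * px (px (px u)) t x + 2 * (u t x * px u t x * px (px u) t x)) x :=
    ((d₀.fun_pow 2).mul d₂).congr_deriv (by ring)
  have convection : HasDerivAt (fun y => u t y ^ 3 / 3) (u t x ^ 2 * px u t x) x :=
    ((d₀.fun_pow 3).div_const 3).congr_deriv (by ring)
  have correction : HasDerivAt (fun y => u t y * px u t y ^ 2 / 2)
      (px u t x ^ 3 / 2 + u t x * px u t x * px (px u) t x) x :=
    ((d₀.mul (d₁.fun_pow 2)).div_const 2).congr_deriv (by ring)
  refine ((((fifth_order.add (third_order.const_mul (B t))).add quasilinear).add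
    (convection.const_mul (E t))).add (correction.const_mul (F t - 2))).congr_deriv ?_
  unfold KdV at hsol
  linear_combination u t x * hsol

lemma continuous_energyFlux (hu : ContDiff ℝ 4 (u t)) : Continuous (energyFlux B E F u t) := by
  have hu₁ : ContDiff ℝ 3 (px u t) := contDiff_px hu
  have hu₂ : ContDiff ℝ 2 (px (px u) t) := contDiff_px hu₁
  have hu₃ : ContDiff ℝ 1 (px (px (px u)) t) := contDiff_px hu₂
  have hu₄ : ContDiff ℝ 0 (px (px (px (px u))) t) := contDiff_px hu₃
  have c₀ := hu.continuous
  have c₁ := hu₁.continuous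
  have c₂ := hu₂.continuous
  have c₃ := hu₃.continuous
  have c₄ := hu₄.continuous
  unfold energyFlux
  fun_prop

lemma hasCompactSupport_energyFlux (hu : HasCompactSupport (u t)) :
    HasCompactSupport (energyFlux B E F u t) := by
  have hu₁ := hasCompactSupport_px hu
  have hu₂ := hasCompactSupport_px hu₁
  rw [hasCompactSupport_iff_eventuallyEq] at hu hu₁ hu₂ ⊢
  filter_upwards [hu, hu₁, hu₂] with x h₀ h₁ h₂
  simp [energyFlux, h₀, h₁, h₂]

theorem integral_mul_pt_of_KdV_eq_zero (hu : ContDiff ℝ 5 (u t)) (hpt : Continuous (pt u t))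
    (hsupp : HasCompactSupport (u t)) (hsol : ∀ x, KdV B E F Q u t x = 0) :
    (∫ x, u t x * pt u t x) =
      (F t - 2) / 2 * (∫ x, px u t x ^ 3) - Q t * ∫ x, u t x ^ 2 := by
  have hu₁ : ContDiff ℝ 4 (px u t) := contDiff_px hu
  have int_mul_pt : Integrable fun x => u t x * pt u t x :=
    (hu.continuous.mul hpt).integrable_of_hasCompactSupport hsupp.mul_right
  have int_source : Integrable fun x => (F t - 2) / 2 * px u t x ^ 3 :=
    (integrable_pow_of_hasCompactSupport hu₁.continuous (hasCompactSupport_px hsupp)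
      three_ne_zero).const_mul _
  have int_damping : Integrable fun x => Q t * u t x ^ 2 :=
    (integrable_pow_of_hasCompactSupport hu.continuous hsupp two_ne_zero).const_mul _
  have int_source_sub_damping :
      Integrable fun x => (F t - 2) / 2 * px u t x ^ 3 - Q t * u t x ^ 2 :=
    int_source.sub int_damping
  have int_flux : Integrable (energyFlux B E F u t) :=
    (continuous_energyFlux (hu.of_le (by norm_num))).integrable_of_hasCompactSupport
      (hasCompactSupport_energyFlux hsupp)
  have hbalance := integral_eq_zero_of_hasDerivAt_of_integrable
    (fun x => hasDerivAt_energyFlux_of_KdV_eq_zero hu (hsol x))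
    (int_source_sub_damping.sub int_mul_pt) int_flux
  rw [integral_sub int_source_sub_damping int_mul_pt, integral_sub int_source int_damping,
    integral_const_mul, integral_const_mul] at hbalance
  exact (sub_eq_zero.1 hbalance).symm

lemma hasDerivAt_integral_sq (hu : ContDiff ℝ 1 (uncurry u)) {K : Set ℝ} (hK : IsCompact K)
    (hsupp : ∀ᶠ s in 𝓝 t, support (u s) ⊆ K) :
    HasDerivAt (fun s => ∫ x, u s x ^ 2) (2 * ∫ x, u t x * pt u t x) t := by
  rw [← integral_const_mul]
  refine hasDerivAt_integral_of_eventually_support_subset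
    (f' := fun s x => 2 * (u s x * pt u s x)) hK (fun s => (hu.continuous.uncurry_left s).pow 2)
    (continuous_const.mul (hu.continuous.mul (continuous_uncurry_pt hu))) (fun s x => ?_) ?_
  · exact ((hasDerivAt_pt (hu.differentiable one_ne_zero (s, x))).pow 2).congr_deriv
      (by simp [mul_assoc])
  · simpa only [support_pow _ two_ne_zero] using hsupp

theorem conserved_integral_F_eq_two_general (B E F Q H : ℝ → ℝ) (u : ℝ → ℝ → ℝ) (t : ℝ)
    (hH : HasDerivAt H (Q t) t) (hu : ContDiff ℝ 1 (uncurry u)) (hut : ContDiff ℝ 5 (u t))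
    (hsol : ∀ x, KdV B E F Q u t x = 0)
    {K : Set ℝ} (hK : IsCompact K) (hsupp : ∀ᶠ s in 𝓝 t, support (u s) ⊆ K) :
    HasDerivAt (fun s => ∫ x, exp (2 * H s) * u s x ^ 2)
      ((F t - 2) * ∫ x, exp (2 * H t) * px u t x ^ 3) t := by
  have henergy := integral_mul_pt_of_KdV_eq_zero hut ((continuous_uncurry_pt hu).uncurry_left t)
    (.of_support_subset_isCompact hK hsupp.self_of_nhds) hsol
  simp only [integral_const_mul]
  refine ((hH.const_mul 2).exp.mul (hasDerivAt_integral_sq hu hK hsupp)).congr_deriv ?_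
  rw [henergy]
  ring

end EnergyBalance

/-- conserved integral quantity for `F ≡ 2` from the multiplier
`e^{2∫Q} u`.  If `H' = Q`, `u` is a smooth solution of `𝔈[u] = 0` (with `F = 2`)
vanishing for `|x| ≥ L`, then `t ↦ ∫_ℝ e^{2H(t)} u(t,x)² dx` is constant. -/
theorem conserved_integral_F_eq_two
    (B E Q : ℝ → ℝ)
    (hB : ContDiff ℝ (⊤ : ℕ∞) B) (hE : ContDiff ℝ (⊤ : ℕ∞) E)
    (hQ : ContDiff ℝ (⊤ : ℕ∞) Q)
    (H : ℝ → ℝ) (hH : ∀ t, HasDerivAt H (Q t) t)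
    (u : ℝ → ℝ → ℝ) (hu : ContDiff ℝ (⊤ : ℕ∞) (Function.uncurry u))
    (hsol : ∀ t x, KdV B E (fun _ => 2) Q u t x = 0)
    (hsupp : ∃ L > (0 : ℝ), ∀ t x : ℝ, L ≤ |x| → u t x = 0) :
    ∀ t₁ t₂ : ℝ,
      (∫ x : ℝ, Real.exp (2 * H t₁) * (u t₁ x) ^ 2)
        = ∫ x : ℝ, Real.exp (2 * H t₂) * (u t₂ x) ^ 2 := by
  obtain ⟨L, -, hL⟩ := hsupp
  have hsupp (s : ℝ) : Function.support (u s) ⊆ Metric.closedBall 0 L := fun x hx => by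
    simpa using (lt_of_not_ge fun hLx => hx (hL s x hLx)).le
  have hderiv (t : ℝ) : HasDerivAt (fun s => ∫ x, exp (2 * H s) * u s x ^ 2) 0 t := by
    simpa using conserved_integral_F_eq_two_general B E (fun _ => 2) Q H u t (hH t)
      (hu.of_le (mod_cast le_top)) ((contDiff_infty.1 hu 5).comp (contDiff_prodMk_right t))
      (hsol t) (isCompact_closedBall 0 L) (.of_forall hsupp)
  exact is_const_of_deriv_eq_zero (fun t => (hderiv t).differentiableAt) fun t => (hderiv t).deriv
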